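/- Let H be a real Hilbert space, d ≥ 1 an integer, C ⊆ H a nonempty closed convex set with ‖x − y‖ ≤ d for all x, y ∈ C, T : C → C nonexpansive with Fix(T) ≠ ∅, and G : C → C a τ-contraction (0 ≤ τ < 1). Let (λ_n) ⊆ (0,1], h : ℕ → ℕ⁺ with λ_n ≥ 1/h(n) for all n, χ : ℕ → ℕ with λ_i ≤ 1/(n+1) for all n ∈ ℕ and all i ≥ χ(n), φ₁ : (0,∞) → ℕ with Σ_{i=1}^{φ₁(x)} λ_i ≥ x for all real x > 0, and φ₂ : (0,∞) → ℕ with |λ_n − λ_{n+1}|/λ_{n+1}² ≤ δ for all δ > 0 and all n ≥ φ₂(δ). Let u₀ ∈ C and u_{n+1} := (1−λ_{n+1})·T(u_n) + λ_{n+1}·G(T(u_n)). Then for every ε ∈ (0,1], every g : ℕ → ℕ and every x ∈ C there exists n ≤ Ξ(δ₀/6, g_c, χ, h, d, τ) + c, where δ₀ := ε/(2d(2+τ)), c := φ₁((φ₂((1−τ)²δ₀/(6d)) + ln(6d/δ₀))/(1−τ)) and g_c(m) := m + c + g(m + c), such that: (i) ‖u_i − u_j‖ ≤ ε for all i, j ∈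 [n; n + g(n)]; and (ii) if ‖T(x) − x‖ ≤ 1/K, where K := k_{i₀} is the quantity occurring in the definition of Ξ(δ₀/6, g_c, χ, h, d, τ), then ⟨G(u_n) − u_n, x − u_n⟩ ≤ ε. -/

import Mathlib

open scoped RealInnerProductSpace

/-- `fM f n = max {f i : 1 ≤ i ≤ n}`. -/
def fM (f : ℕ → ℕ) (n : ℕ) : ℕ := (Finset.Icc 1 n).sup f

/-- `ftilde d f n = max {fᴹ(16·d·n²), 16·d·n²}`. -/
def ftilde (d : ℕ) (f : ℕ → ℕ) (n : ℕ) : ℕ := max (fM f (16 * d * n ^ 2)) (16 * d * n ^ 2)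

/-- `fIt d nε f i = f̃^(nε^i)`, the `nε^i`-fold iterate of `f̃`. -/
def fIt (d nε : ℕ) (f : ℕ → ℕ) (i : ℕ) (k : ℕ) : ℕ := (ftilde d f)^[nε ^ i] k

/-- `ftildeI d nε f i n = max {fᵢᴹ(16·d·n²), 16·d·n²}`. -/
def ftildeI (d nε : ℕ) (f : ℕ → ℕ) (i : ℕ) (n : ℕ) : ℕ :=
  max (fM (fIt d nε f i) (16 * d * n ^ 2)) (16 * d * n ^ 2)

/-- The recursively defined sequence `k₀ := f̃₀^(nε)(1)`, `k_{i+1} := f̃ᵢ^(nε)(kᵢ)`. -/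
def kSeq (d nε : ℕ) (f : ℕ → ℕ) : ℕ → ℕ
  | 0 => (ftildeI d nε f 0)^[nε] 1
  | (i + 1) => (ftildeI d nε f i)^[nε] (kSeq d nε f i)

/-- `Kdef d τ ε̃ f = k_{i₀}` where `n_ε̃ := ⌈8d⁴/ε̃⁴⌉` and `i₀` is the least `i`
with `τ^(i+1) ≤ ε̃/(6d²)`. -/
noncomputable def Kdef (d : ℕ) (τ εt : ℝ) (f : ℕ → ℕ) : ℕ :=
  kSeq d ⌈8 * (d : ℝ) ^ 4 / εt ^ 4⌉₊ f
    (sInf {i : ℕ | τ ^ (i + 1) ≤ εt / (6 * (d : ℝ) ^ 2)})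

/-- `fM0 F n = max {F i : 0 ≤ i ≤ n}` (for functions on ℕ). -/
def fM0 (F : ℕ → ℕ) (n : ℕ) : ℕ := (Finset.range (n + 1)).sup F

/-- `gTil g n = max {n, g n}`. -/
def gTil (g : ℕ → ℕ) (n : ℕ) : ℕ := max n (g n)

/-- The counterfunction majorant `f(n) := ⌈6d·hᴹ(g̃ᴹ(χ(d·n)))/((1−τ)(ε/2)²)⌉`. -/
noncomputable def fXi (ε τ : ℝ) (g χ h : ℕ → ℕ) (d : ℕ) (n : ℕ) : ℕ :=
  ⌈6 * (d : ℝ) * (fM0 h (fM0 (gTil g) (χ (d * n))) : ℝ) / ((1 - τ) * (ε / 2) ^ 2)⌉₊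

/-- The quantity `K = k_{i₀}` occurring in the definition of `Ξ(ε, g, χ, h, d, τ)`,
with `ε₁ := (1−τ)(ε/2)²/2`, `ε_d := ε₁²/(2d²)` and `ε̃ := ((1−τ)²/(6+8d))·ε_d`. -/
noncomputable def KXi (ε : ℝ) (g χ h : ℕ → ℕ) (d : ℕ) (τ : ℝ) : ℕ :=
  Kdef d τ ((1 - τ) ^ 2 / (6 + 8 * (d : ℝ)) *
    (((1 - τ) * (ε / 2) ^ 2 / 2) ^ 2 / (2 * (d : ℝ) ^ 2))) (fXi ε τ g χ h d)

/-- The rate of metastability `Ξ(ε, g, χ, h, d, τ) := χ(d·k_{i₀})`. -/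
noncomputable def XiDef (ε : ℝ) (g χ h : ℕ → ℕ) (d : ℕ) (τ : ℝ) : ℕ :=
  χ (d * KXi ε g χ h d τ)

/-- The shift `c := φ₁((φ₂((1−τ)²δ/(6d)) + ln(6d/δ))/(1−τ))`. -/
noncomputable def cDef (τ : ℝ) (d : ℕ) (φ₁ φ₂ : ℝ → ℕ) (δ : ℝ) : ℕ :=
  φ₁ ((↑(φ₂ ((1 - τ) ^ 2 * δ / (6 * (d : ℝ)))) + Real.log (6 * (d : ℝ) / δ)) / (1 - τ))

/-- The shifted counterfunction `g_c(m) := m + c + g(m + c)`. -/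
def gcDef (g : ℕ → ℕ) (c : ℕ) (m : ℕ) : ℕ := m + c + g (m + c)

/-!
The iterates `u n` follow the hybrid path `V`, where `V t` is the fixed point of
`x ↦ (1 - t) T x + t G (T x)`, because `t ↦ V t` varies slowly compared with the contraction factor
`1 - t (1 - τ)`. So everything reduces to metastability of `V` as `t → 0`.

If the contraction `G` is replaced by a constant `a`, the quantity `‖a - Z t‖²` is bounded and
monotone along the path `Z` of the resulting maps, and its increments dominate `‖Z t - Z s‖²`. By
pigeonhole, among `M` consecutive blocks of parameters there is one on which `Z` moves by at most
`D / √M`. Now suppose `V` stays within `ρ` of a point `c` on a long block of parameters. The path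
anchored at `a = G (T c)` is then within `τ ρ` of `V`, so on one of `M` subblocks `V` stays within
`τ ρ + D / √M` of a new point. Repeating this drives the radius down geometrically.

The variational inequality holds along `V` up to an error `D ‖T x - x‖ / t + 2 t D²`, which is small
once `‖T x - x‖` is small compared with `t`; it transfers to `u n` by perturbation.
-/

section HybridMap

variable {H : Type*} [NormedAddCommGroup H] [NormedSpace ℝ H]

/-- One step of the hybrid steepest descent scheme with step size `t`. The iteration of the theorem
is `u (n + 1) = hybridMap T G (lam (n + 1)) (u n)`. A constant map `G` gives Halpern's scheme. -/
def hybridMap (T G : H → H) (t : ℝ) (x : H) : H := (1 - t) • T x + t • G (T x)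

/-- The standing assumptions of the hybrid scheme: `T` is a nonexpansive and `G` a `τ`-contractive
self-map of the convex set `C`. Both maps are total, but nothing is asked of them outside `C`. -/
structure IsHybridPair (C : Set H) (T G : H → H) (τ : ℝ) : Prop where
  convex : Convex ℝ C
  mapsTo_nonexpansive : Set.MapsTo T C C
  norm_nonexpansive_sub_le : ∀ x ∈ C, ∀ y ∈ C, ‖T x - T y‖ ≤ ‖x - y‖
  mapsTo_contraction : Set.MapsTo G C C
  norm_contraction_sub_le : ∀ x ∈ C, ∀ y ∈ C, ‖G x - G y‖ ≤ τ * ‖x - y‖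
  nonneg : 0 ≤ τ
  lt_one : τ < 1

/-- `V` is the implicit path of the hybrid scheme: `V t` is a fixed point of `hybridMap T G t` in
`C` for every `t ∈ (0, 1]`. The values of `V` at other parameters are irrelevant. -/
def IsHybridPath (C : Set H) (T G : H → H) (V : ℝ → H) : Prop :=
  ∀ t ∈ Set.Ioc (0 : ℝ) 1, V t ∈ C ∧ Function.IsFixedPt (hybridMap T G t) (V t)

variable {C : Set H} {T G : H → H} {V Z : ℝ → H} {τ s t D κ : ℝ} {a c x y : H}

namespace IsHybridPair

theorem const (hP : IsHybridPair C T G τ) (ha : a ∈ C) : IsHybridPair C T (fun _ ↦ a) 0 where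
  convex := hP.convex
  mapsTo_nonexpansive := hP.mapsTo_nonexpansive
  norm_nonexpansive_sub_le := hP.norm_nonexpansive_sub_le
  mapsTo_contraction := fun _ _ ↦ ha
  norm_contraction_sub_le := by simp
  nonneg := le_rfl
  lt_one := one_pos

theorem mapsTo_hybridMap (hP : IsHybridPair C T G τ) (ht : t ∈ Set.Icc (0 : ℝ) 1) :
    Set.MapsTo (hybridMap T G t) C C := fun _ hx ↦
  hP.convex (hP.mapsTo_nonexpansive hx) (hP.mapsTo_contraction (hP.mapsTo_nonexpansive hx))
    (sub_nonneg.2 ht.2) ht.1 (sub_add_cancel 1 t)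

theorem norm_comp_sub_le (hP : IsHybridPair C T G τ) (hx : x ∈ C) (hy : y ∈ C) :
    ‖G (T x) - G (T y)‖ ≤ τ * ‖x - y‖ :=
  (hP.norm_contraction_sub_le _ (hP.mapsTo_nonexpansive hx) _ (hP.mapsTo_nonexpansive hy)).trans <|
    mul_le_mul_of_nonneg_left (hP.norm_nonexpansive_sub_le x hx y hy) hP.nonneg

theorem norm_contraction_sub_le_norm_sub (hP : IsHybridPair C T G τ) (hx : x ∈ C) (hy : y ∈ C) :
    ‖G x - G y‖ ≤ ‖x - y‖ :=
  (hP.norm_contraction_sub_le x hx y hy).trans <|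
    mul_le_of_le_one_left (norm_nonneg _) hP.lt_one.le

theorem norm_hybridMap_sub_le (hP : IsHybridPair C T G τ) (ht : t ∈ Set.Icc (0 : ℝ) 1)
    (hx : x ∈ C) (hy : y ∈ C) :
    ‖hybridMap T G t x - hybridMap T G t y‖ ≤ (1 - t * (1 - τ)) * ‖x - y‖ :=
  have h1t : 0 ≤ 1 - t := sub_nonneg.2 ht.2
  calc ‖hybridMap T G t x - hybridMap T G t y‖
      = ‖(1 - t) • (T x - T y) + t • (G (T x) - G (T y))‖ := by
        congr 1; simp only [hybridMap]; module
    _ ≤ (1 - t) * ‖T x - T y‖ + t * ‖G (T x) - G (T y)‖ := by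
        refine (norm_add_le _ _).trans_eq ?_
        rw [norm_smul_of_nonneg h1t, norm_smul_of_nonneg ht.1]
    _ ≤ (1 - t) * ‖x - y‖ + t * (τ * ‖x - y‖) :=
        add_le_add (mul_le_mul_of_nonneg_left (hP.norm_nonexpansive_sub_le x hx y hy) h1t)
          (mul_le_mul_of_nonneg_left (hP.norm_comp_sub_le hx hy) ht.1)
    _ = (1 - t * (1 - τ)) * ‖x - y‖ := by ring

theorem one_sub_mul_nonneg (hP : IsHybridPair C T G τ) (ht : t ∈ Set.Icc (0 : ℝ) 1) :
    0 ≤ 1 - t * (1 - τ) :=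
  sub_nonneg.2 <| mul_le_one₀ ht.2 (sub_nonneg.2 hP.lt_one.le) (sub_le_self 1 hP.nonneg)

theorem exists_isFixedPt_hybridMap (hP : IsHybridPair C T G τ) (hC : IsComplete C)
    (hne : C.Nonempty) (ht : t ∈ Set.Ioc (0 : ℝ) 1) :
    ∃ z ∈ C, Function.IsFixedPt (hybridMap T G t) z := by
  obtain ⟨p, hp⟩ := hne
  have htI : t ∈ Set.Icc (0 : ℝ) 1 := Set.Ioc_subset_Icc_self ht
  have hmaps := hP.mapsTo_hybridMap htI
  have hcontr : ContractingWith ⟨1 - t * (1 - τ), hP.one_sub_mul_nonneg htI⟩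
      (hmaps.restrict (hybridMap T G t) C C) := by
    refine ⟨?_, LipschitzWith.of_dist_le_mul fun x y ↦ ?_⟩
    · exact NNReal.coe_lt_coe.1 (sub_lt_self 1 (mul_pos ht.1 (sub_pos.2 hP.lt_one)))
    · rw [Subtype.dist_eq, Subtype.dist_eq, dist_eq_norm, dist_eq_norm]
      exact hP.norm_hybridMap_sub_le htI x.2 y.2
  obtain ⟨z, hz, hfix, -⟩ := hcontr.exists_fixedPoint' hC hmaps hp (edist_ne_top _ _)
  exact ⟨z, hz, hfix⟩

theorem exists_isHybridPath (hP : IsHybridPair C T G τ) (hC : IsComplete C) (hne : C.Nonempty) :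
    ∃ V, IsHybridPath C T G V := by
  choose! V hV using fun t (ht : t ∈ Set.Ioc (0 : ℝ) 1) ↦
    hP.exists_isFixedPt_hybridMap hC hne ht
  exact ⟨V, hV⟩

theorem hybridMap_iterate_mem (hP : IsHybridPair C T G τ) {lam : ℕ → ℝ}
    (hlam : ∀ n, lam n ∈ Set.Icc (0 : ℝ) 1) {u : ℕ → H} (hu0 : u 0 ∈ C)
    (hu : ∀ n, u (n + 1) = hybridMap T G (lam (n + 1)) (u n)) (n : ℕ) : u n ∈ C := by
  induction n with
  | zero => exact hu0
  | succ n ih => exact hu n ▸ hP.mapsTo_hybridMap (hlam (n + 1)) ih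

end IsHybridPair

namespace IsHybridPath

theorem mem (hV : IsHybridPath C T G V) (ht : t ∈ Set.Ioc (0 : ℝ) 1) : V t ∈ C := (hV t ht).1

theorem eq (hV : IsHybridPath C T G V) (ht : t ∈ Set.Ioc (0 : ℝ) 1) :
    V t = (1 - t) • T (V t) + t • G (T (V t)) := (hV t ht).2.symm

theorem sub_nonexpansive_eq (hV : IsHybridPath C T G V) (ht : t ∈ Set.Ioc (0 : ℝ) 1) :
    V t - T (V t) = t • (G (T (V t)) - T (V t)) := by
  nth_rw 1 [hV.eq ht]
  module

theorem mul_norm_sub_le (hV : IsHybridPath C T G V) (hP : IsHybridPair C T G τ)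
    (hD : ∀ x ∈ C, ∀ y ∈ C, ‖x - y‖ ≤ D) (hs : s ∈ Set.Ioc (0 : ℝ) 1)
    (ht : t ∈ Set.Ioc (0 : ℝ) 1) : t * (1 - τ) * ‖V s - V t‖ ≤ |s - t| * D := by
  have hTs : T (V s) ∈ C := hP.mapsTo_nonexpansive (hV.mem hs)
  have hsplit : V s - V t = (hybridMap T G t (V s) - hybridMap T G t (V t)) +
      (s - t) • (G (T (V s)) - T (V s)) := by
    nth_rw 1 [hV.eq hs]
    rw [(hV t ht).2.eq, hybridMap]
    module
  have hmap := hP.norm_hybridMap_sub_le (Set.Ioc_subset_Icc_self ht) (hV.mem hs) (hV.mem ht)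
  have hshift : ‖(s - t) • (G (T (V s)) - T (V s))‖ ≤ |s - t| * D := by
    rw [norm_smul, Real.norm_eq_abs]
    exact mul_le_mul_of_nonneg_left (hD _ (hP.mapsTo_contraction hTs) _ hTs) (abs_nonneg _)
  have htri : ‖V s - V t‖ ≤ (1 - t * (1 - τ)) * ‖V s - V t‖ + |s - t| * D := by
    nth_rw 1 [hsplit]
    exact (norm_add_le _ _).trans (add_le_add hmap hshift)
  linarith

theorem norm_hybridMap_sub_le (hV : IsHybridPath C T G V) (hP : IsHybridPair C T G τ)
    (hD : ∀ x ∈ C, ∀ y ∈ C, ‖x - y‖ ≤ D) (hD0 : 0 < D) (hs : s ∈ Set.Ioc (0 : ℝ) 1)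
    (ht : t ∈ Set.Ioc (0 : ℝ) 1) (hst : |s - t| / t ^ 2 ≤ (1 - τ) ^ 2 * κ / D) (hx : x ∈ C) :
    ‖hybridMap T G t x - V t‖ ≤ (1 - (1 - τ) * t) * ‖x - V s‖ + (1 - τ) * t * κ := by
  have hτ : 0 < 1 - τ := sub_pos.2 hP.lt_one
  have htτ : 0 < t * (1 - τ) := mul_pos ht.1 hτ
  have hfactor := hP.one_sub_mul_nonneg (Set.Ioc_subset_Icc_self ht)
  have hpath : ‖V s - V t‖ ≤ t * (1 - τ) * κ := by
    rw [div_le_div_iff₀ (pow_pos ht.1 2) hD0] at hst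
    refine le_of_mul_le_mul_left ?_ htτ
    calc t * (1 - τ) * ‖V s - V t‖ ≤ |s - t| * D := hV.mul_norm_sub_le hP hD hs ht
      _ ≤ (1 - τ) ^ 2 * κ * t ^ 2 := hst
      _ = t * (1 - τ) * (t * (1 - τ) * κ) := by ring
  calc ‖hybridMap T G t x - V t‖
      = ‖hybridMap T G t x - hybridMap T G t (V t)‖ := by rw [(hV t ht).2.eq]
    _ ≤ (1 - t * (1 - τ)) * ‖x - V t‖ :=
        hP.norm_hybridMap_sub_le (Set.Ioc_subset_Icc_self ht) hx (hV.mem ht)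
    _ ≤ (1 - t * (1 - τ)) * (‖x - V s‖ + ‖V s - V t‖) :=
        mul_le_mul_of_nonneg_left (norm_sub_le_norm_sub_add_norm_sub _ _ _) hfactor
    _ ≤ (1 - (1 - τ) * t) * ‖x - V s‖ + (1 - τ) * t * κ := by
        nlinarith [norm_nonneg (V s - V t)]

theorem norm_sub_anchored_le (hV : IsHybridPath C T G V) (hP : IsHybridPair C T G τ) (hc : c ∈ C)
    (hZ : IsHybridPath C T (fun _ ↦ G (T c)) Z) (ht : t ∈ Set.Ioc (0 : ℝ) 1) :
    ‖V t - Z t‖ ≤ τ * ‖V t - c‖ := by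
  have h1t : 0 ≤ 1 - t := sub_nonneg.2 ht.2
  have hsplit : V t - Z t = (1 - t) • (T (V t) - T (Z t)) + t • (G (T (V t)) - G (T c)) := by
    nth_rw 1 [hV.eq ht, hZ.eq ht]
    module
  have htri : ‖V t - Z t‖ ≤ (1 - t) * ‖V t - Z t‖ + t * (τ * ‖V t - c‖) := by
    nth_rw 1 [hsplit]
    refine (norm_add_le _ _).trans ?_
    rw [norm_smul_of_nonneg h1t, norm_smul_of_nonneg ht.1.le]
    exact add_le_add
      (mul_le_mul_of_nonneg_left
        (hP.norm_nonexpansive_sub_le _ (hV.mem ht) _ (hZ.mem ht)) h1t)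
      (mul_le_mul_of_nonneg_left (hP.norm_comp_sub_le (hV.mem ht) hc) ht.1.le)
  exact le_of_mul_le_mul_left (by linarith) ht.1

end IsHybridPath

end HybridMap

section AnchoredPath

theorem exists_lt_sub_le_div {M : ℕ} (hM : 0 < M) (E : ℕ → ℝ) :
    ∃ i < M, E (i + 1) - E i ≤ (E M - E 0) / M := by
  have hsum : ∑ i ∈ Finset.range M, (E (i + 1) - E i) ≤
      ∑ _i ∈ Finset.range M, (E M - E 0) / M := by
    rw [Finset.sum_range_sub, Finset.sum_const, Finset.card_range, nsmul_eq_mul,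
      mul_div_cancel₀ _ (Nat.cast_ne_zero.2 hM.ne')]
  obtain ⟨i, hi, hle⟩ := Finset.exists_le_of_sum_le (Finset.nonempty_range_iff.2 hM.ne') hsum
  exact ⟨i, Finset.mem_range.1 hi, hle⟩

variable {H : Type*} [NormedAddCommGroup H] [InnerProductSpace ℝ H]
  {C : Set H} {T G : H → H} {V Z : ℝ → H} {τ s t D ρ q : ℝ} {a x y x' y' : H}

theorem mul_sq_norm_sub_le_mul_inner_of_anchored (hst : s ≤ t) (ht1 : t ≤ 1)
    (hx : x = (1 - t) • x' + t • a) (hy : y = (1 - s) • y' + s • a)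
    (hxy : ‖x' - y'‖ ≤ ‖x - y‖) : (1 - t) * s * ‖x - y‖ ^ 2 ≤ (t - s) * ⟪a - x, x - y⟫ := by
  have hmono : ⟪x' - y', x - y⟫ ≤ ‖x - y‖ ^ 2 := by
    nlinarith [real_inner_le_norm (x' - y') (x - y), norm_nonneg (x - y)]
  have hcomb : ((1 - s) * (1 - t)) • (x' - y') =
      ((1 - s) * (1 - t) + (1 - t) * s) • (x - y) - (t - s) • (a - x) := by
    have hx' : (1 - t) • x' = x - t • a := eq_sub_of_add_eq hx.symm
    have hy' : (1 - s) • y' = y - s • a := eq_sub_of_add_eq hy.symm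
    calc ((1 - s) * (1 - t)) • (x' - y') = (1 - s) • (1 - t) • x' - (1 - t) • (1 - s) • y' := by
          module
      _ = _ := by rw [hx', hy']; module
  have hinner := congrArg (fun z ↦ ⟪z, x - y⟫) hcomb
  simp only [inner_sub_left (_ • _), real_inner_smul_left, real_inner_self_eq_norm_sq] at hinner
  have hcoef : 0 ≤ (1 - s) * (1 - t) := mul_nonneg (by linarith) (by linarith)
  linarith [mul_le_mul_of_nonneg_left hmono hcoef]

theorem inner_sub_nonneg_of_anchored (hs0 : 0 < s) (hst : s ≤ t) (ht1 : t ≤ 1)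
    (hx : x = (1 - t) • x' + t • a) (hy : y = (1 - s) • y' + s • a)
    (hxy : ‖x' - y'‖ ≤ ‖x - y‖) : 0 ≤ ⟪a - x, x - y⟫ := by
  rcases hst.eq_or_lt with rfl | hlt
  · have hsub : x - y = (1 - s) • (x' - y') := by
      nth_rw 1 [hx, hy]
      module
    have hnorm : ‖x - y‖ ≤ (1 - s) * ‖x - y‖ := by
      nth_rw 1 [hsub]
      rw [norm_smul_of_nonneg (sub_nonneg.2 ht1)]
      exact mul_le_mul_of_nonneg_left hxy (sub_nonneg.2 ht1)
    have hzero : x - y = 0 := norm_le_zero_iff.1 (by nlinarith)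
    rw [hzero, inner_zero_right]
  · have hle := mul_sq_norm_sub_le_mul_inner_of_anchored hst ht1 hx hy hxy
    have hcoef : 0 ≤ (1 - t) * s * ‖x - y‖ ^ 2 :=
      mul_nonneg (mul_nonneg (sub_nonneg.2 ht1) hs0.le) (sq_nonneg _)
    exact nonneg_of_mul_nonneg_right (hcoef.trans hle) (sub_pos.2 hlt)

theorem sq_norm_sub_le_of_anchored (hs0 : 0 < s) (hst : s ≤ t) (ht1 : t ≤ 1)
    (hx : x = (1 - t) • x' + t • a) (hy : y = (1 - s) • y' + s • a)
    (hxy : ‖x' - y'‖ ≤ ‖x - y‖) : ‖x - y‖ ^ 2 ≤ ‖a - y‖ ^ 2 - ‖a - x‖ ^ 2 := by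
  have hexpand : ‖a - y‖ ^ 2 = ‖a - x‖ ^ 2 + 2 * ⟪a - x, x - y⟫ + ‖x - y‖ ^ 2 := by
    rw [← norm_add_sq_real, sub_add_sub_cancel]
  linarith [inner_sub_nonneg_of_anchored hs0 hst ht1 hx hy hxy]

namespace IsHybridPath

theorem sq_norm_anchored_sub_le (hZ : IsHybridPath C T (fun _ ↦ a) Z)
    (hT : ∀ x ∈ C, ∀ y ∈ C, ‖T x - T y‖ ≤ ‖x - y‖) (hs : s ∈ Set.Ioc (0 : ℝ) 1)
    (ht : t ∈ Set.Ioc (0 : ℝ) 1) (hst : s ≤ t) :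
    ‖Z t - Z s‖ ^ 2 ≤ ‖a - Z s‖ ^ 2 - ‖a - Z t‖ ^ 2 :=
  sq_norm_sub_le_of_anchored hs.1 hst ht.2 (hZ.eq ht) (hZ.eq hs)
    (hT _ (hZ.mem ht) _ (hZ.mem hs))

theorem exists_block_norm_anchored_sub_le (hZ : IsHybridPath C T (fun _ ↦ a) Z)
    (hT : ∀ x ∈ C, ∀ y ∈ C, ‖T x - T y‖ ≤ ‖x - y‖) (hD : ∀ x ∈ C, ∀ y ∈ C, ‖x - y‖ ≤ D)
    (ha : a ∈ C) {r : ℕ → ℝ} (hr : ∀ i, r i ∈ Set.Ioc (0 : ℝ) 1) {M : ℕ} (hM : 0 < M) :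
    ∃ i < M, ∀ t ∈ Set.Icc (r (i + 1)) (r i), ‖Z t - Z (r i)‖ ≤ D / √M := by
  obtain ⟨i, hiM, hi⟩ := exists_lt_sub_le_div hM fun i ↦ ‖a - Z (r i)‖ ^ 2
  refine ⟨i, hiM, fun t ht ↦ ?_⟩
  have ht01 : t ∈ Set.Ioc (0 : ℝ) 1 := ⟨(hr _).1.trans_le ht.1, ht.2.trans (hr _).2⟩
  have hEM : ‖a - Z (r M)‖ ≤ D := hD a ha _ (hZ.mem (hr M))
  have hD0 : 0 ≤ D := (norm_nonneg _).trans hEM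
  have hsq : ‖Z t - Z (r i)‖ ^ 2 ≤ D ^ 2 / M := by
    calc ‖Z t - Z (r i)‖ ^ 2 = ‖Z (r i) - Z t‖ ^ 2 := by rw [norm_sub_rev]
      _ ≤ ‖a - Z t‖ ^ 2 - ‖a - Z (r i)‖ ^ 2 := hZ.sq_norm_anchored_sub_le hT ht01 (hr i) ht.2
      _ ≤ ‖a - Z (r (i + 1))‖ ^ 2 - ‖a - Z (r i)‖ ^ 2 := by
        linarith [hZ.sq_norm_anchored_sub_le hT (hr (i + 1)) ht01 ht.1,
          sq_nonneg ‖Z t - Z (r (i + 1))‖]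
      _ ≤ (‖a - Z (r M)‖ ^ 2 - ‖a - Z (r 0)‖ ^ 2) / M := hi
      _ ≤ D ^ 2 / M := by
        gcongr
        exact (sub_le_self _ (sq_nonneg _)).trans (pow_le_pow_left₀ (norm_nonneg _) hEM 2)
  refine le_of_sq_le_sq ?_ (by positivity)
  rwa [div_pow, Real.sq_sqrt M.cast_nonneg]

theorem exists_block_norm_sub_le_of_norm_sub_le (hV : IsHybridPath C T G V)
    (hP : IsHybridPair C T G τ) (hC : IsComplete C) (hD : ∀ x ∈ C, ∀ y ∈ C, ‖x - y‖ ≤ D)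
    {r : ℕ → ℝ} (hr : Antitone r) (hr01 : ∀ i, r i ∈ Set.Ioc (0 : ℝ) 1) {M : ℕ} (hM : 0 < M)
    {c : H} (hc : c ∈ C) (hVc : ∀ t ∈ Set.Icc (r M) (r 0), ‖V t - c‖ ≤ ρ) :
    ∃ i < M, ∃ c' ∈ C, ∀ t ∈ Set.Icc (r (i + 1)) (r i), ‖V t - c'‖ ≤ τ * ρ + D / √M := by
  have hGTc : G (T c) ∈ C := hP.mapsTo_contraction (hP.mapsTo_nonexpansive hc)
  obtain ⟨Z, hZ⟩ := (hP.const hGTc).exists_isHybridPath hC ⟨c, hc⟩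
  obtain ⟨i, hiM, hi⟩ :=
    hZ.exists_block_norm_anchored_sub_le hP.norm_nonexpansive_sub_le hD hGTc hr01 hM
  refine ⟨i, hiM, Z (r i), hZ.mem (hr01 i), fun t ht ↦ ?_⟩
  have ht01 : t ∈ Set.Ioc (0 : ℝ) 1 := ⟨(hr01 _).1.trans_le ht.1, ht.2.trans (hr01 _).2⟩
  have hρ : ‖V t - c‖ ≤ ρ := hVc t ⟨(hr hiM).trans ht.1, ht.2.trans (hr i.zero_le)⟩
  calc ‖V t - Z (r i)‖ ≤ ‖V t - Z t‖ + ‖Z t - Z (r i)‖ := norm_sub_le_norm_sub_add_norm_sub _ _ _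
    _ ≤ τ * ρ + D / √M :=
      add_le_add ((hV.norm_sub_anchored_le hP hc hZ ht01).trans
        (mul_le_mul_of_nonneg_left hρ hP.nonneg)) (hi t ht)

theorem exists_block_norm_sub_le (hV : IsHybridPath C T G V) (hP : IsHybridPair C T G τ)
    (hC : IsComplete C) (hne : C.Nonempty) (hD : ∀ x ∈ C, ∀ y ∈ C, ‖x - y‖ ≤ D)
    {θ : ℕ → ℝ} (hθ : Antitone θ) (hθ01 : ∀ n, θ n ∈ Set.Ioc (0 : ℝ) 1) {M : ℕ} (hM : 0 < M)
    (hq : D / √M ≤ (1 - τ) * q) (hq0 : 0 ≤ q) (j L : ℕ) :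
    ∃ s, s + L ≤ M ^ j * L ∧ ∃ c ∈ C, ∀ t ∈ Set.Icc (θ (s + L)) (θ s),
      ‖V t - c‖ ≤ τ ^ j * D + q := by
  induction j generalizing L with
  | zero =>
    obtain ⟨p, hp⟩ := hne
    refine ⟨0, by simp, p, hp, fun t ht ↦ ?_⟩
    have ht01 : t ∈ Set.Ioc (0 : ℝ) 1 := ⟨(hθ01 _).1.trans_le ht.1, ht.2.trans (hθ01 _).2⟩
    rw [pow_zero, one_mul]
    exact (hD _ (hV.mem ht01) p hp).trans (le_add_of_nonneg_right hq0)
  | succ j ih =>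
    obtain ⟨s, hs, c, hc, hVc⟩ := ih (M * L)
    obtain ⟨i, hiM, c', hc', hVc'⟩ := hV.exists_block_norm_sub_le_of_norm_sub_le hP hC hD
      (r := fun i ↦ θ (s + i * L)) (fun i i' hii' ↦ hθ (by gcongr)) (fun i ↦ hθ01 _) hM hc
      (by simpa using hVc)
    refine ⟨s + i * L, ?_, c', hc', fun t ht ↦ ?_⟩
    · calc s + i * L + L = s + (i + 1) * L := by ring
        _ ≤ s + M * L := by gcongr; exact hiM
        _ ≤ M ^ j * (M * L) := hs
        _ = M ^ (j + 1) * L := by ring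
    · have hblock : s + (i + 1) * L = s + i * L + L := by ring
      calc ‖V t - c'‖ ≤ τ * (τ ^ j * D + q) + D / √M := hVc' t (by simpa only [hblock] using ht)
        _ ≤ τ * (τ ^ j * D + q) + (1 - τ) * q := by gcongr
        _ = τ ^ (j + 1) * D + q := by ring

end IsHybridPath

end AnchoredPath

section CounterfunctionIterates

theorem le_fM (f : ℕ → ℕ) {m n : ℕ} (hm : 1 ≤ m) (hmn : m ≤ n) : f m ≤ fM f n :=
  Finset.le_sup (f := f) (Finset.mem_Icc.2 ⟨hm, hmn⟩)

theorem fM_mono (f : ℕ → ℕ) : Monotone (fM f) := fun _ _ hmn ↦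
  Finset.sup_mono (Finset.Icc_subset_Icc_right hmn)

theorem le_fM0 (F : ℕ → ℕ) {m n : ℕ} (hmn : m ≤ n) : F m ≤ fM0 F n :=
  Finset.le_sup (f := F) (Finset.mem_range_succ_iff.2 hmn)

theorem le_sixteen_mul_mul_sq {d : ℕ} (hd : 1 ≤ d) (n : ℕ) : n ≤ 16 * d * n ^ 2 :=
  (Nat.le_self_pow two_ne_zero n).trans (Nat.le_mul_of_pos_left _ (by omega))

theorem ftilde_mono (d : ℕ) (f : ℕ → ℕ) : Monotone (ftilde d f) := fun a b hab ↦
  have h : 16 * d * a ^ 2 ≤ 16 * d * b ^ 2 := by gcongr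
  max_le_max (fM_mono f h) h

theorem id_le_ftilde {d : ℕ} (hd : 1 ≤ d) (f : ℕ → ℕ) : id ≤ ftilde d f := fun n ↦
  (le_sixteen_mul_mul_sq hd n).trans (le_max_right _ _)

theorem le_ftilde {d : ℕ} (hd : 1 ≤ d) (f : ℕ → ℕ) {n : ℕ} (hn : 1 ≤ n) : f n ≤ ftilde d f n :=
  (le_fM f hn (le_sixteen_mul_mul_sq hd n)).trans (le_max_left _ _)

theorem fIt_le_ftildeI {d : ℕ} (hd : 1 ≤ d) (N : ℕ) (f : ℕ → ℕ) (i : ℕ) :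
    fIt d N f i ≤ ftildeI d N f i := by
  intro n
  rcases n.eq_zero_or_pos with rfl | hn
  · have hfixed : ftilde d f 0 = 0 := by simp [ftilde, fM]
    rw [fIt, Function.iterate_fixed hfixed]
    exact Nat.zero_le _
  · exact (le_fM _ hn (le_sixteen_mul_mul_sq hd n)).trans (le_max_left _ _)

theorem iterate_ftilde_le_iterate_ftildeI {d : ℕ} (hd : 1 ≤ d) (N : ℕ) (f : ℕ → ℕ)
    (i m k : ℕ) : (ftilde d f)^[N ^ i * m] k ≤ (ftildeI d N f i)^[m] k := by
  rw [Function.iterate_mul]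
  exact ((ftilde_mono d f).iterate _).iterate_le_of_le (fIt_le_ftildeI hd N f i) m k

theorem iterate_ftilde_one_le_kSeq {d : ℕ} (hd : 1 ≤ d) (N : ℕ) (f : ℕ → ℕ) (i : ℕ) :
    (ftilde d f)^[N ^ max i 1] 1 ≤ kSeq d N f i := by
  induction i with
  | zero => simpa [kSeq] using iterate_ftilde_le_iterate_ftildeI hd N f 0 N 1
  | succ i ih =>
    have hone : 1 ≤ kSeq d N f i :=
      (Function.id_le_iterate_of_id_le (id_le_ftilde hd f) _ 1).trans ih
    calc (ftilde d f)^[N ^ max (i + 1) 1] 1 = (ftilde d f)^[N ^ i * N] 1 := by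
          rw [max_eq_left (Nat.le_add_left 1 i), pow_succ]
      _ ≤ (ftilde d f)^[N ^ i * N] (kSeq d N f i) := (ftilde_mono d f).iterate _ hone
      _ ≤ kSeq d N f (i + 1) := iterate_ftilde_le_iterate_ftildeI hd N f i N _

end CounterfunctionIterates

section PathMetastability

theorem exists_ceil_eq_add_one {D η : ℝ} (hη0 : 0 < η) (hηD : η ≤ D) :
    ∃ M : ℕ, ⌈8 * D ^ 4 / η ^ 4⌉₊ = M + 1 ∧ 0 < M ∧ D / √M ≤ η := by
  have hone : 1 ≤ (D / η) ^ 2 := one_le_pow₀ ((one_le_div hη0).2 hηD)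
  have hceil : 8 * ((D / η) ^ 2) ^ 2 ≤ ⌈8 * D ^ 4 / η ^ 4⌉₊ := by
    refine le_of_eq_of_le ?_ (Nat.le_ceil _)
    ring
  obtain ⟨M, hM⟩ := Nat.exists_eq_succ_of_ne_zero
    (Nat.cast_pos (α := ℝ).1 (lt_of_lt_of_le (by positivity) hceil)).ne'
  rw [hM, Nat.cast_succ] at hceil
  have hsq : (D / η) ^ 2 ≤ M := by nlinarith
  have hM0 : (0 : ℝ) < M := by linarith
  refine ⟨M, hM, Nat.cast_pos.1 hM0, ?_⟩
  rw [div_le_iff₀ (Real.sqrt_pos.2 hM0), ← div_le_iff₀' hη0]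
  exact Real.le_sqrt_of_sq_le hsq

/-- The block search yields the power `max i₀ 1` of `τ` instead of `i₀ + 1`, and
`i₀ + 1 ≤ 2 * max i₀ 1`, whence the square root. -/
theorem pow_max_sInf_one_mul_le_sqrt {d : ℕ} {τ η : ℝ} (hd : 1 ≤ d) (hτ0 : 0 ≤ τ) (hτ1 : τ < 1)
    (hη : 0 < η) :
    τ ^ max (sInf {i : ℕ | τ ^ (i + 1) ≤ η / (6 * (d : ℝ) ^ 2)}) 1 * d ≤ √η := by
  have hd0 : (0 : ℝ) < d := Nat.cast_pos.2 hd
  have hbound : 0 < η / (6 * (d : ℝ) ^ 2) := div_pos hη (mul_pos (by norm_num) (pow_pos hd0 2))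
  obtain ⟨k, hk⟩ := exists_pow_lt_of_lt_one hbound hτ1
  have hmem := Nat.sInf_mem (s := {i : ℕ | τ ^ (i + 1) ≤ η / (6 * (d : ℝ) ^ 2)})
    ⟨k, (pow_le_pow_of_le_one hτ0 hτ1.le k.le_succ).trans hk.le⟩
  set i₀ := sInf {i : ℕ | τ ^ (i + 1) ≤ η / (6 * (d : ℝ) ^ 2)}
  refine Real.le_sqrt_of_sq_le ?_
  calc (τ ^ max i₀ 1 * d) ^ 2 = τ ^ (max i₀ 1 * 2) * (d : ℝ) ^ 2 := by rw [mul_pow, pow_mul]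
    _ ≤ τ ^ (i₀ + 1) * (d : ℝ) ^ 2 :=
      mul_le_mul_of_nonneg_right (pow_le_pow_of_le_one hτ0 hτ1.le (by omega)) (sq_nonneg _)
    _ ≤ η / (6 * (d : ℝ) ^ 2) * (d : ℝ) ^ 2 := by gcongr; exact hmem
    _ = η / 6 := by field_simp
    _ ≤ η := by linarith

theorem rate_parameter_pos_and_le {τ e D : ℝ} (hτ0 : 0 ≤ τ) (hτ1 : τ < 1)
    (he : e ∈ Set.Ioc (0 : ℝ) 1) (hD : 1 ≤ D) :
    0 < (1 - τ) ^ 2 / (6 + 8 * D) * (((1 - τ) * (e / 2) ^ 2 / 2) ^ 2 / (2 * D ^ 2)) ∧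
      (1 - τ) ^ 2 / (6 + 8 * D) * (((1 - τ) * (e / 2) ^ 2 / 2) ^ 2 / (2 * D ^ 2)) ≤
        (1 - τ) * (e / 4) ^ 2 := by
  have hτ : 0 < 1 - τ := sub_pos.2 hτ1
  have he0 := he.1
  refine ⟨by positivity, mul_le_mul ?_ ?_ (by positivity) hτ.le⟩
  · rw [div_le_iff₀ (by linarith)]
    nlinarith
  · have hinner : (1 - τ) * (e / 2) ^ 2 / 2 ≤ e / 4 := by nlinarith [sq_nonneg e, he.2]
    exact (div_le_self (sq_nonneg _) (by nlinarith)).trans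
      (pow_le_pow_left₀ (by positivity) hinner 2)

theorem sqrt_add_div_le_half {τ e η : ℝ} (hτ1 : τ < 1) (hτ0 : 0 ≤ τ) (he : e ∈ Set.Ioc (0 : ℝ) 1)
    (hη : η ≤ (1 - τ) * (e / 4) ^ 2) : √η + η / (1 - τ) ≤ e / 2 := by
  have hsqrt : √η ≤ e / 4 := Real.sqrt_le_iff.2 ⟨by linarith [he.1], by nlinarith [sq_nonneg e]⟩
  have hdiv : η / (1 - τ) ≤ e / 4 := by
    rw [div_le_iff₀' (sub_pos.2 hτ1)]
    refine hη.trans (mul_le_mul_of_nonneg_left ?_ (sub_nonneg.2 hτ1.le))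
    nlinarith [he.1, he.2]
  linarith

theorem mul_fM0_le_mul_fXi {τ e : ℝ} (hτ0 : 0 ≤ τ) (hτ1 : τ < 1) (he : e ∈ Set.Ioc (0 : ℝ) 1)
    (g χ h : ℕ → ℕ) (d n : ℕ) :
    24 * (d : ℝ) * fM0 h (fM0 (gTil g) (χ (d * n))) ≤ e * fXi e τ g χ h d n := by
  have hden : 0 < (1 - τ) * (e / 2) ^ 2 :=
    mul_pos (sub_pos.2 hτ1) (pow_pos (half_pos he.1) 2)
  have hden_le : (1 - τ) * (e / 2) ^ 2 ≤ e / 4 := by nlinarith [sq_nonneg e, he.1, he.2]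
  have hceil := (div_le_iff₀ hden).1 (Nat.le_ceil
    (6 * (d : ℝ) * (fM0 h (fM0 (gTil g) (χ (d * n))) : ℝ) / ((1 - τ) * (e / 2) ^ 2)))
  have hmul := mul_le_mul_of_nonneg_left hden_le (Nat.cast_nonneg (α := ℝ) (fXi e τ g χ h d n))
  rw [← fXi] at hceil
  linarith

theorem mul_le_mul_fXi {τ e : ℝ} (hτ0 : 0 ≤ τ) (hτ1 : τ < 1) (he : e ∈ Set.Ioc (0 : ℝ) 1)
    (g χ : ℕ → ℕ) {h : ℕ → ℕ} (hh : ∀ n, 1 ≤ h n) (d n : ℕ) :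
    24 * (d : ℝ) ≤ e * fXi e τ g χ h d n :=
  (le_mul_of_one_le_right (by positivity)
    (Nat.one_le_cast.2 ((hh _).trans (le_fM0 h le_rfl)))).trans
    (mul_fM0_le_mul_fXi hτ0 hτ1 he g χ h d n)

theorem mul_div_add_mul_sq_le {e r t D k K : ℝ} (ht : 0 < t) (hD : 0 ≤ D) (he : 0 ≤ e)
    (hk0 : 0 ≤ k) (hK : 0 < K) (hr : r ≤ 1 / K) (hKt : 24 * D ≤ e * K * t)
    (htk : t ≤ 1 / (D * k + 1)) (hk : 24 * D ≤ e * k) : r * D / t + 2 * t * D ^ 2 ≤ e := by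
  have hfirst : r * D / t ≤ e / 24 := by
    rw [div_le_iff₀ ht]
    calc r * D ≤ 1 / K * D := mul_le_mul_of_nonneg_right hr hD
      _ ≤ 1 / K * (e * K * t / 24) := by gcongr; linarith
      _ = e / 24 * t := by field_simp
  have hsecond : 2 * t * D ^ 2 ≤ e / 12 := by
    rw [le_div_iff₀ (by positivity)] at htk
    have hDkt : D * k * t ≤ 1 := by linarith
    linarith [mul_le_mul_of_nonneg_left hk (mul_nonneg ht.le hD), mul_le_of_le_one_right he hDkt]
  linarith

theorem mem_Icc_one_div_of_mul_le {e t F D k : ℝ} (he : e ≤ 1) (hD : 1 ≤ D) (hk : 0 < k)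
    (hF : 0 < F) (ht : 0 ≤ t) (hFt : 24 * D ≤ e * F * t) (htk : t ≤ 1 / (D * k + 1)) :
    t ∈ Set.Icc (1 / F) (1 / k) := by
  refine ⟨?_, htk.trans (one_div_le_one_div_of_le hk (by nlinarith))⟩
  rw [div_le_iff₀' hF]
  linarith [mul_le_of_le_one_left (mul_nonneg hF.le ht) he]

/-- `χ` need not be monotone, so the window starts at the smaller of `χ (d * k)` and `χ (d * K)`:
the former keeps `g m` below the argument of `h` in `fXi`, the latter gives the rate. -/
theorem exists_stepsize_window {τ e : ℝ} (hτ0 : 0 ≤ τ) (hτ1 : τ < 1) (he : e ∈ Set.Ioc (0 : ℝ) 1)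
    {lam : ℕ → ℝ} {h χ : ℕ → ℕ} (hh : ∀ n, 1 ≤ h n) (hlamh : ∀ n, 1 / (h n : ℝ) ≤ lam n)
    (hχ : ∀ n : ℕ, ∀ i ≥ χ n, lam i ≤ 1 / ((n : ℝ) + 1)) (g : ℕ → ℕ) (d : ℕ) {k K : ℕ}
    (hkK : k ≤ K) :
    ∃ m ≤ χ (d * K), ∀ i ∈ Set.Icc m (g m),
      24 * (d : ℝ) ≤ e * fXi e τ g χ h d k * lam i ∧ lam i ≤ 1 / ((d : ℝ) * k + 1) := by
  refine ⟨min (χ (d * k)) (χ (d * K)), min_le_right _ _, fun i ⟨hmi, hig⟩ ↦ ⟨?_, ?_⟩⟩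
  · have hh0 : (0 : ℝ) < h i := Nat.cast_pos.2 (hh i)
    have hlam0 : 0 ≤ lam i := (one_div_nonneg.2 hh0.le).trans (hlamh i)
    have hle : h i ≤ fM0 h (fM0 (gTil g) (χ (d * k))) :=
      le_fM0 h ((hig.trans (le_max_right _ _)).trans (le_fM0 (gTil g) (min_le_left _ _)))
    calc 24 * (d : ℝ) ≤ 24 * d * (lam i * h i) :=
          le_mul_of_one_le_right (by positivity) ((div_le_iff₀ hh0).1 (hlamh i))
      _ ≤ 24 * d * (lam i * fM0 h (fM0 (gTil g) (χ (d * k)))) := by gcongr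
      _ = 24 * d * fM0 h (fM0 (gTil g) (χ (d * k))) * lam i := by ring
      _ ≤ e * fXi e τ g χ h d k * lam i :=
          mul_le_mul_of_nonneg_right (mul_fM0_le_mul_fXi hτ0 hτ1 he g χ h d k) hlam0
  · rcases min_le_iff.1 hmi with hi | hi
    · exact_mod_cast hχ (d * k) i hi
    · calc lam i ≤ 1 / ((d * K : ℕ) + 1 : ℝ) := hχ (d * K) i hi
        _ ≤ 1 / ((d : ℝ) * k + 1) := by
          push_cast
          gcongr

variable {H : Type*} [NormedAddCommGroup H] [InnerProductSpace ℝ H]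
  {C : Set H} {T G : H → H} {V : ℝ → H} {τ t D e η : ℝ} {x u v : H} {d : ℕ}

theorem inner_sub_le_inner_sub_add (p q u v x : H) :
    ⟪p - u, x - u⟫ ≤
      ⟪q - v, x - v⟫ + (‖p - q‖ + ‖u - v‖) * ‖x - u‖ + ‖q - v‖ * ‖u - v‖ := by
  have hsplit : ⟪p - u, x - u⟫ =
      ⟪q - v, x - v⟫ + ⟪p - q, x - u⟫ + ⟪v - u, x - u⟫ + ⟪q - v, v - u⟫ := by
    simp only [inner_sub_left, inner_sub_right]
    ring
  have hvu := real_inner_le_norm (v - u) (x - u)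
  have hqv := real_inner_le_norm (q - v) (v - u)
  rw [norm_sub_rev v u] at hvu hqv
  linarith [real_inner_le_norm (p - q) (x - u)]

theorem IsHybridPair.inner_contraction_sub_le (hP : IsHybridPair C T G τ)
    (hD : ∀ x ∈ C, ∀ y ∈ C, ‖x - y‖ ≤ D) (hu : u ∈ C) (hv : v ∈ C) (hx : x ∈ C) :
    ⟪G u - u, x - u⟫ ≤ ⟪G v - v, x - v⟫ + (2 + τ) * D * ‖u - v‖ := by
  have hmain := inner_sub_le_inner_sub_add (G u) (G v) u v x
  have hτ := hP.nonneg
  have hfirst : (‖G u - G v‖ + ‖u - v‖) * ‖x - u‖ ≤ (τ * ‖u - v‖ + ‖u - v‖) * D := by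
    gcongr
    exacts [hP.norm_contraction_sub_le u hu v hv, hD x hx u hu]
  have hsecond : ‖G v - v‖ * ‖u - v‖ ≤ D * ‖u - v‖ := by
    gcongr
    exact hD _ (hP.mapsTo_contraction hv) v hv
  linarith

namespace IsHybridPath

theorem inner_comp_sub_le (hV : IsHybridPath C T G V)
    (hT : ∀ x ∈ C, ∀ y ∈ C, ‖T x - T y‖ ≤ ‖x - y‖) (ht : t ∈ Set.Ioc (0 : ℝ) 1) (hx : x ∈ C) :
    ⟪G (T (V t)) - T (V t), x - V t⟫ ≤ ‖T x - x‖ * ‖x - V t‖ / t := by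
  rw [le_div_iff₀' ht.1]
  have hmono : ⟪T x - T (V t), x - V t⟫ ≤ ‖x - V t‖ * ‖x - V t‖ :=
    (real_inner_le_norm _ _).trans
      (mul_le_mul_of_nonneg_right (hT x hx _ (hV.mem ht)) (norm_nonneg _))
  calc t * ⟪G (T (V t)) - T (V t), x - V t⟫
      = ⟪V t - T (V t), x - V t⟫ := by rw [hV.sub_nonexpansive_eq ht, real_inner_smul_left]
    _ = ⟪T x - T (V t), x - V t⟫ - ‖x - V t‖ * ‖x - V t‖ + ⟪x - T x, x - V t⟫ := by
        rw [← real_inner_self_eq_norm_mul_norm, ← inner_sub_left, ← inner_add_left]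
        congr 1
        abel
    _ ≤ ⟪x - T x, x - V t⟫ := by linarith
    _ ≤ ‖T x - x‖ * ‖x - V t‖ := norm_sub_rev x (T x) ▸ real_inner_le_norm _ _

theorem inner_contraction_sub_le (hV : IsHybridPath C T G V) (hP : IsHybridPair C T G τ)
    (hD : ∀ x ∈ C, ∀ y ∈ C, ‖x - y‖ ≤ D) (ht : t ∈ Set.Ioc (0 : ℝ) 1) (hx : x ∈ C) :
    ⟪G (V t) - V t, x - V t⟫ ≤ ‖T x - x‖ * D / t + 2 * t * D ^ 2 := by
  have hVt : V t ∈ C := hV.mem ht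
  have hTV : T (V t) ∈ C := hP.mapsTo_nonexpansive hVt
  have ht0 := ht.1
  have hxV : ‖x - V t‖ ≤ D := hD x hx _ hVt
  have hnear : ‖V t - T (V t)‖ ≤ t * D := by
    rw [hV.sub_nonexpansive_eq ht, norm_smul_of_nonneg ht0.le]
    exact mul_le_mul_of_nonneg_left (hD _ (hP.mapsTo_contraction hTV) _ hTV) ht0.le
  have hle : ∀ w : H, ‖w‖ ≤ ‖V t - T (V t)‖ → ⟪w, x - V t⟫ ≤ t * D * D := fun w hw ↦
    (real_inner_le_norm _ _).trans
      (mul_le_mul (hw.trans hnear) hxV (norm_nonneg _) ((norm_nonneg _).trans hnear))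
  calc ⟪G (V t) - V t, x - V t⟫
      = ⟪G (T (V t)) - T (V t), x - V t⟫ + ⟪G (V t) - G (T (V t)), x - V t⟫ +
          ⟪T (V t) - V t, x - V t⟫ := by
        rw [← inner_add_left, ← inner_add_left]
        congr 1
        abel
    _ ≤ ‖T x - x‖ * D / t + t * D * D + t * D * D := by
        refine add_le_add (add_le_add ?_ ?_) (hle _ (norm_sub_rev _ _).le)
        · exact (hV.inner_comp_sub_le hP.norm_nonexpansive_sub_le ht hx).trans (by gcongr)
        · exact hle _ (hP.norm_contraction_sub_le_norm_sub hVt hTV)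
    _ = ‖T x - x‖ * D / t + 2 * t * D ^ 2 := by ring

theorem exists_metastable_block (hV : IsHybridPath C T G V) (hP : IsHybridPair C T G τ)
    (hC : IsComplete C) (hne : C.Nonempty) (hd : 1 ≤ d) (hD : ∀ x ∈ C, ∀ y ∈ C, ‖x - y‖ ≤ (d : ℝ))
    (hη0 : 0 < η) (hη1 : η ≤ 1) (f : ℕ → ℕ) :
    ∃ k, 1 ≤ k ∧ f 1 ≤ k ∧ ftilde d f k ≤ Kdef d τ η f ∧
      ∃ c ∈ C, ∀ t ∈ Set.Icc (1 / (ftilde d f k : ℝ)) (1 / k), ‖V t - c‖ ≤ √η + η / (1 - τ) := by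
  have hτ : 0 < 1 - τ := sub_pos.2 hP.lt_one
  obtain ⟨M, hN, hM, hDM⟩ := exists_ceil_eq_add_one (D := d) hη0
    (hη1.trans (Nat.one_le_cast.2 hd))
  set i₀ := sInf {i : ℕ | τ ^ (i + 1) ≤ η / (6 * (d : ℝ) ^ 2)}
  have hmono : Monotone fun n ↦ (ftilde d f)^[n] 1 := fun m n hmn ↦
    Function.monotone_iterate_of_id_le (id_le_ftilde hd f) hmn 1
  have hone : ∀ n, 1 ≤ (ftilde d f)^[n] 1 := fun n ↦ hmono n.zero_le
  have hpos : ∀ n, (0 : ℝ) < (ftilde d f)^[n] 1 := fun n ↦ Nat.cast_pos.2 (hone n)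
  obtain ⟨s, hs, c, hc, hVc⟩ := hV.exists_block_norm_sub_le hP hC hne hD
    (θ := fun n ↦ 1 / ((ftilde d f)^[n + 1] 1 : ℝ)) (q := η / (1 - τ))
    (fun m n hmn ↦ one_div_le_one_div_of_le (hpos _)
      (Nat.cast_le.2 (hmono (Nat.succ_le_succ hmn))))
    (fun n ↦ ⟨one_div_pos.2 (hpos _), div_le_one_of_le₀ (Nat.one_le_cast.2 (hone _)) (hpos _).le⟩)
    hM (by rwa [mul_div_cancel₀ _ hτ.ne']) (by positivity) (max i₀ 1) 1
  have hindex : s + 2 ≤ (M + 1) ^ max i₀ 1 := by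
    have hlt : M ^ max i₀ 1 < (M + 1) ^ max i₀ 1 := Nat.pow_lt_pow_left M.lt_succ_self (by omega)
    omega
  have hsucc : ftilde d f ((ftilde d f)^[s + 1] 1) = (ftilde d f)^[s + 2] 1 :=
    (Function.iterate_succ_apply' _ _ _).symm
  refine ⟨(ftilde d f)^[s + 1] 1, hone _, ?_, ?_, c, hc, fun t ht ↦ ?_⟩
  · exact (le_ftilde hd f le_rfl).trans (hmono (Nat.le_add_left 1 s))
  · rw [hsucc, Kdef, hN]
    exact (hmono hindex).trans (iterate_ftilde_one_le_kSeq hd (M + 1) f i₀)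
  · rw [hsucc] at ht
    exact (hVc t ht).trans (add_le_add_left
      (pow_max_sInf_one_mul_le_sqrt hd hP.nonneg hP.lt_one hη0) _)

theorem exists_metastable_with_vip (hV : IsHybridPath C T G V) (hP : IsHybridPair C T G τ)
    (hC : IsComplete C) (hne : C.Nonempty) (hd : 1 ≤ d) (hD : ∀ x ∈ C, ∀ y ∈ C, ‖x - y‖ ≤ (d : ℝ))
    (he : e ∈ Set.Ioc (0 : ℝ) 1) {lam : ℕ → ℝ} (hlam : ∀ n, lam n ∈ Set.Ioc (0 : ℝ) 1)
    {h χ : ℕ → ℕ} (hh : ∀ n, 1 ≤ h n) (hlamh : ∀ n, 1 / (h n : ℝ) ≤ lam n)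
    (hχ : ∀ n : ℕ, ∀ i ≥ χ n, lam i ≤ 1 / ((n : ℝ) + 1)) (g : ℕ → ℕ) :
    ∃ m ≤ XiDef e g χ h d τ,
      (∀ i ∈ Set.Icc m (g m), ∀ j ∈ Set.Icc m (g m), ‖V (lam i) - V (lam j)‖ ≤ e) ∧
      ∀ i ∈ Set.Icc m (g m), ∀ x ∈ C, ‖T x - x‖ ≤ 1 / (KXi e g χ h d τ : ℝ) →
        ⟪G (V (lam i)) - V (lam i), x - V (lam i)⟫ ≤ e := by
  have hd1 : (1 : ℝ) ≤ d := Nat.one_le_cast.2 hd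
  obtain ⟨hη0, hη⟩ := rate_parameter_pos_and_le hP.nonneg hP.lt_one he hd1
  have hη1 := hη.trans (by nlinarith [hP.nonneg, he.1, he.2] : (1 - τ) * (e / 4) ^ 2 ≤ 1)
  obtain ⟨k, hk, hfk, hkK, c, -, hVc⟩ :=
    hV.exists_metastable_block hP hC hne hd hD hη0 hη1 (fXi e τ g χ h d)
  rw [← KXi] at hkK
  set f := fXi e τ g χ h d
  have hkF : k ≤ ftilde d f k := id_le_ftilde hd f k
  have hF0 : (0 : ℝ) < ftilde d f k := Nat.cast_pos.2 (hk.trans hkF)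
  obtain ⟨m, hm, hwindow⟩ :=
    exists_stepsize_window hP.nonneg hP.lt_one he hh hlamh hχ g d (hkF.trans hkK)
  have hstep : ∀ i ∈ Set.Icc m (g m), 24 * (d : ℝ) ≤ e * ftilde d f k * lam i := fun i hi ↦
    (hwindow i hi).1.trans <| mul_le_mul_of_nonneg_right
      (mul_le_mul_of_nonneg_left (Nat.cast_le.2 (le_ftilde hd f hk)) he.1.le) (hlam i).1.le
  refine ⟨m, hm, ?_, fun i hi x hx hTx ↦ ?_⟩
  · have hnear : ∀ i ∈ Set.Icc m (g m), ‖V (lam i) - c‖ ≤ e / 2 := fun i hi ↦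
      (hVc _ (mem_Icc_one_div_of_mul_le he.2 hd1 (Nat.cast_pos.2 hk) hF0 (hlam i).1.le
        (hstep i hi) (hwindow i hi).2)).trans (sqrt_add_div_le_half hP.lt_one hP.nonneg he hη)
    intro i hi j hj
    have hcj := hnear j hj
    rw [norm_sub_rev] at hcj
    linarith [hnear i hi, norm_sub_le_norm_sub_add_norm_sub (V (lam i)) c (V (lam j))]
  · have hek : 24 * (d : ℝ) ≤ e * k := (mul_le_mul_fXi hP.nonneg hP.lt_one he g χ hh d 1).trans
      (mul_le_mul_of_nonneg_left (Nat.cast_le.2 hfk) he.1.le)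
    have hTx' := hTx.trans (one_div_le_one_div_of_le hF0 (Nat.cast_le.2 hkK))
    exact (hV.inner_contraction_sub_le hP hD (hlam i) hx).trans
      (mul_div_add_mul_sq_le (hlam i).1 d.cast_nonneg he.1.le k.cast_nonneg hF0 hTx'
        (hstep i hi) (hwindow i hi).2 hek)

end IsHybridPath

end PathMetastability

section Tracking

theorem le_add_mul_exp_neg_sum_Ioc {a μ : ℕ → ℝ} {κ D : ℝ} {P : ℕ} (hμ : ∀ n, μ n ≤ 1)
    (hD : 0 ≤ D) (haP : a P ≤ κ + D)
    (ha : ∀ n ≥ P, a (n + 1) ≤ (1 - μ (n + 1)) * a n + μ (n + 1) * κ) {n : ℕ} (hn : P ≤ n) :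
    a n ≤ κ + D * Real.exp (-∑ i ∈ Finset.Ioc P n, μ i) := by
  induction n, hn using Nat.le_induction with
  | base => simpa using haP
  | succ n hn ih =>
    rw [Finset.sum_Ioc_succ_top hn, neg_add, Real.exp_add]
    set E := Real.exp (-∑ i ∈ Finset.Ioc P n, μ i)
    have hE : 0 ≤ D * E := mul_nonneg hD (Real.exp_nonneg _)
    calc a (n + 1) ≤ (1 - μ (n + 1)) * a n + μ (n + 1) * κ := ha n hn
      _ ≤ (1 - μ (n + 1)) * (κ + D * E) + μ (n + 1) * κ := by
        gcongr
        exact sub_nonneg.2 (hμ _)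
      _ = κ + D * E * (1 - μ (n + 1)) := by ring
      _ ≤ κ + D * E * Real.exp (-μ (n + 1)) := by
        linarith [mul_le_mul_of_nonneg_left (Real.one_sub_le_exp_neg (μ (n + 1))) hE]
      _ = κ + D * (E * Real.exp (-μ (n + 1))) := by ring

theorem le_two_mul_of_log_le_sum_Ioc {a μ : ℕ → ℝ} {κ D : ℝ} {P : ℕ} (hμ : ∀ n, μ n ≤ 1)
    (hκ : 0 < κ) (hD : 0 < D) (haP : a P ≤ D)
    (ha : ∀ n ≥ P, a (n + 1) ≤ (1 - μ (n + 1)) * a n + μ (n + 1) * κ) {n : ℕ} (hn : P ≤ n)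
    (hsum : Real.log (D / κ) ≤ ∑ i ∈ Finset.Ioc P n, μ i) : a n ≤ 2 * κ := by
  have hexp : D * Real.exp (-∑ i ∈ Finset.Ioc P n, μ i) ≤ κ := by
    rw [Real.exp_neg, ← div_eq_mul_inv, div_le_iff₀ (Real.exp_pos _), ← div_le_iff₀' hκ]
    exact (Real.log_le_iff_le_exp (div_pos hD hκ)).1 hsum
  linarith [le_add_mul_exp_neg_sum_Ioc hμ hD.le (by linarith) ha hn]

theorem le_sum_Ioc_of_add_le_sum_Icc {μ : ℕ → ℝ} (hμ : ∀ n, μ n ∈ Set.Icc (0 : ℝ) 1) {L : ℝ}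
    (hL : 0 ≤ L) {P c n : ℕ} (hc : P + L ≤ ∑ i ∈ Finset.Icc 1 c, μ i) (hcn : c ≤ n) :
    P ≤ n ∧ L ≤ ∑ i ∈ Finset.Ioc P n, μ i := by
  have hle : ∀ m : ℕ, ∑ i ∈ Finset.Ioc 0 m, μ i ≤ m := fun m ↦ by
    simpa using Finset.sum_le_card_nsmul (Finset.Ioc 0 m) μ 1 fun i _ ↦ (hμ i).2
  have hn : P + L ≤ ∑ i ∈ Finset.Ioc 0 n, μ i :=
    hc.trans (Finset.sum_le_sum_of_subset_of_nonneg (Finset.Icc_subset_Icc_right hcn)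
      fun i _ _ ↦ (hμ i).1)
  have hPn : P ≤ n := Nat.cast_le.1 ((le_add_of_nonneg_right hL).trans (hn.trans (hle n)))
  refine ⟨hPn, ?_⟩
  rw [← Finset.sum_Ioc_consecutive μ P.zero_le hPn] at hn
  linarith [hle P]

namespace IsHybridPath

variable {H : Type*} [NormedAddCommGroup H] [NormedSpace ℝ H]
  {C : Set H} {T G : H → H} {V : ℝ → H} {τ D κ δ : ℝ} {lam : ℕ → ℝ} {u : ℕ → H}

theorem norm_sub_le_two_mul (hV : IsHybridPath C T G V) (hP : IsHybridPair C T G τ)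
    (hD : ∀ x ∈ C, ∀ y ∈ C, ‖x - y‖ ≤ D) (hlam : ∀ n, lam n ∈ Set.Ioc (0 : ℝ) 1)
    (hu0 : u 0 ∈ C) (hu : ∀ n, u (n + 1) = hybridMap T G (lam (n + 1)) (u n))
    (hκ : 0 < κ) (hκD : κ ≤ D) {P c n : ℕ}
    (hvar : ∀ n ≥ P, |lam n - lam (n + 1)| / lam (n + 1) ^ 2 ≤ (1 - τ) ^ 2 * κ / D)
    (hsum : (P + Real.log (D / κ)) / (1 - τ) ≤ ∑ i ∈ Finset.Icc 1 c, lam i) (hn : c ≤ n) :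
    ‖u n - V (lam n)‖ ≤ 2 * κ := by
  have hτ : 0 < 1 - τ := sub_pos.2 hP.lt_one
  have hD0 : 0 < D := hκ.trans_le hκD
  have huC := hP.hybridMap_iterate_mem (fun n ↦ Set.Ioc_subset_Icc_self (hlam n)) hu0 hu
  have hμ : ∀ n, (1 - τ) * lam n ∈ Set.Icc (0 : ℝ) 1 := fun n ↦
    ⟨mul_nonneg hτ.le (hlam n).1.le,
      mul_le_one₀ (sub_le_self 1 hP.nonneg) (hlam n).1.le (hlam n).2⟩
  rw [div_le_iff₀' hτ, Finset.mul_sum] at hsum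
  obtain ⟨hPn, hlog⟩ := le_sum_Ioc_of_add_le_sum_Icc hμ
    (Real.log_nonneg ((one_le_div hκ).2 hκD)) hsum hn
  refine le_two_mul_of_log_le_sum_Ioc (a := fun n ↦ ‖u n - V (lam n)‖) (fun n ↦ (hμ n).2) hκ hD0
    (hD _ (huC P) _ (hV.mem (hlam P))) (fun n hn ↦ ?_) hPn hlog
  rw [hu]
  exact hV.norm_hybridMap_sub_le hP hD hD0 (hlam n) (hlam (n + 1)) (hvar n hn) (huC n)

theorem norm_sub_le_of_cDef_le (hV : IsHybridPath C T G V) (hP : IsHybridPair C T G τ) {d : ℕ}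
    (hd : 1 ≤ d) (hD : ∀ x ∈ C, ∀ y ∈ C, ‖x - y‖ ≤ (d : ℝ))
    (hlam : ∀ n, lam n ∈ Set.Ioc (0 : ℝ) 1) {φ₁ φ₂ : ℝ → ℕ}
    (hφ₁ : ∀ x : ℝ, 0 < x → x ≤ ∑ i ∈ Finset.Icc 1 (φ₁ x), lam i)
    (hφ₂ : ∀ δ : ℝ, 0 < δ → ∀ n ≥ φ₂ δ, |lam n - lam (n + 1)| / (lam (n + 1)) ^ 2 ≤ δ)
    (hu0 : u 0 ∈ C) (hu : ∀ n, u (n + 1) = hybridMap T G (lam (n + 1)) (u n))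
    (hδ : δ ∈ Set.Ioc (0 : ℝ) 1) {n : ℕ} (hn : cDef τ d φ₁ φ₂ δ ≤ n) :
    ‖u n - V (lam n)‖ ≤ δ / 3 := by
  have hτ : 0 < 1 - τ := sub_pos.2 hP.lt_one
  have hδ0 := hδ.1
  have hd1 : (1 : ℝ) ≤ d := Nat.one_le_cast.2 hd
  have hratio : 6 * (d : ℝ) / δ = d / (δ / 6) := by field_simp
  have hlog : 0 < Real.log (6 * d / δ) :=
    Real.log_pos ((one_lt_div hδ0).2 (by linarith [hδ.2]))
  have hmain := hV.norm_sub_le_two_mul hP hD hlam hu0 hu (κ := δ / 6) (by positivity)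
    (by linarith [hδ.2]) (P := φ₂ ((1 - τ) ^ 2 * δ / (6 * (d : ℝ)))) (c := cDef τ d φ₁ φ₂ δ)
    (fun n hn ↦ (hφ₂ _ (by positivity) n hn).trans_eq (by field_simp))
    (by rw [← hratio]; exact hφ₁ _ (by positivity)) hn
  linarith

end IsHybridPath

end Tracking

theorem scale_pos_and_le_and_mul_eq {ε D τ : ℝ} (hε : 0 < ε) (hD : 1 ≤ D) (hτ : 0 ≤ τ) :
    0 < ε / (2 * D * (2 + τ)) ∧ 4 * (ε / (2 * D * (2 + τ))) ≤ ε ∧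
      (2 + τ) * D * (ε / (2 * D * (2 + τ))) = ε / 2 := by
  refine ⟨by positivity, ?_, by field_simp⟩
  have hDτ : 4 ≤ 2 * D * (2 + τ) := by nlinarith
  rw [mul_div_assoc', div_le_iff₀ (by positivity)]
  linarith [mul_le_mul_of_nonneg_left hDτ hε.le]

theorem norm_sub_le_of_near {E : Type*} [SeminormedAddCommGroup E] {x y v w : E} {r s : ℝ}
    (hx : ‖x - v‖ ≤ r) (hvw : ‖v - w‖ ≤ s) (hy : ‖y - w‖ ≤ r) : ‖x - y‖ ≤ r + s + r := by
  rw [norm_sub_rev] at hy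
  linarith [norm_sub_le_norm_sub_add_norm_sub x v y, norm_sub_le_norm_sub_add_norm_sub v w y]

theorem hsdm_single_metastable_with_vip_general
    {H : Type*} [NormedAddCommGroup H] [InnerProductSpace ℝ H] {d : ℕ} (hd : 1 ≤ d)
    {C : Set H} (hC : IsComplete C) (hD : ∀ x ∈ C, ∀ y ∈ C, ‖x - y‖ ≤ (d : ℝ))
    {T G : H → H} {τ : ℝ} (hP : IsHybridPair C T G τ)
    {lam : ℕ → ℝ} (hlam : ∀ n, lam n ∈ Set.Ioc (0 : ℝ) 1)
    {h : ℕ → ℕ} (hh : ∀ n, 1 ≤ h n) (hlamh : ∀ n, 1 / (h n : ℝ) ≤ lam n)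
    {χ : ℕ → ℕ} (hχ : ∀ n : ℕ, ∀ i ≥ χ n, lam i ≤ 1 / ((n : ℝ) + 1))
    {φ₁ : ℝ → ℕ} (hφ₁ : ∀ x : ℝ, 0 < x → x ≤ ∑ i ∈ Finset.Icc 1 (φ₁ x), lam i)
    {φ₂ : ℝ → ℕ}
    (hφ₂ : ∀ δ : ℝ, 0 < δ → ∀ n ≥ φ₂ δ, |lam n - lam (n + 1)| / (lam (n + 1)) ^ 2 ≤ δ)
    {u : ℕ → H} (hu0 : u 0 ∈ C) (hu : ∀ n, u (n + 1) = hybridMap T G (lam (n + 1)) (u n))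
    {ε : ℝ} (hε : ε ∈ Set.Ioc (0 : ℝ) 1) (g : ℕ → ℕ) :
    ∃ n ≤ XiDef (ε / (2 * (d : ℝ) * (2 + τ)) / 6)
        (gcDef g (cDef τ d φ₁ φ₂ (ε / (2 * (d : ℝ) * (2 + τ))))) χ h d τ +
        cDef τ d φ₁ φ₂ (ε / (2 * (d : ℝ) * (2 + τ))),
      (∀ i ∈ Set.Icc n (n + g n), ∀ j ∈ Set.Icc n (n + g n), ‖u i - u j‖ ≤ ε) ∧
      ∀ i ∈ Set.Icc n (n + g n), ∀ x ∈ C,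
        ‖T x - x‖ ≤ 1 / (KXi (ε / (2 * (d : ℝ) * (2 + τ)) / 6)
          (gcDef g (cDef τ d φ₁ φ₂ (ε / (2 * (d : ℝ) * (2 + τ))))) χ h d τ : ℝ) →
        ⟪G (u i) - u i, x - u i⟫ ≤ ε := by
  have hτ := hP.nonneg
  obtain ⟨hδ0, hδ_le, hδε⟩ := scale_pos_and_le_and_mul_eq hε.1 (Nat.one_le_cast.2 hd) hτ
  set δ := ε / (2 * (d : ℝ) * (2 + τ))
  set c := cDef τ d φ₁ φ₂ δ
  obtain ⟨V, hV⟩ := hP.exists_isHybridPath hC ⟨u 0, hu0⟩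
  obtain ⟨m, hm, hmeta, hvip⟩ := hV.exists_metastable_with_vip hP hC ⟨u 0, hu0⟩ hd hD
    (e := δ / 6) ⟨by positivity, by linarith [hε.2]⟩ hlam hh hlamh hχ (gcDef g c)
  have hwindow : ∀ i ∈ Set.Icc (m + c) (m + c + g (m + c)), i ∈ Set.Icc m (gcDef g c m) :=
    fun i hi ↦ ⟨(Nat.le_add_right m c).trans hi.1, hi.2⟩
  have htrack : ∀ i ∈ Set.Icc (m + c) (m + c + g (m + c)), ‖u i - V (lam i)‖ ≤ δ / 3 := fun i hi ↦
    hV.norm_sub_le_of_cDef_le hP hd hD hlam hφ₁ hφ₂ hu0 hu ⟨hδ0, by linarith [hε.2]⟩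
      ((Nat.le_add_left c m).trans hi.1)
  refine ⟨m + c, Nat.add_le_add_right hm c, fun i hi j hj ↦ ?_, fun i hi x hx hTx ↦ ?_⟩
  · exact (norm_sub_le_of_near (htrack i hi) (hmeta i (hwindow i hi) j (hwindow j hj))
      (htrack j hj)).trans (by linarith)
  · have huC := hP.hybridMap_iterate_mem (fun n ↦ Set.Ioc_subset_Icc_self (hlam n)) hu0 hu i
    calc ⟪G (u i) - u i, x - u i⟫
        ≤ ⟪G (V (lam i)) - V (lam i), x - V (lam i)⟫ + (2 + τ) * d * ‖u i - V (lam i)‖ :=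
          hP.inner_contraction_sub_le hD huC (hV.mem (hlam i)) hx
      _ ≤ δ / 6 + (2 + τ) * d * (δ / 3) := by
          gcongr
          exacts [hvip i (hwindow i hi) x hx hTx, htrack i hi]
      _ ≤ ε := by linarith

/-- Full quantitative version of Yamada's theorem for a single nonexpansive mapping:
rate of metastability for the iteration together with the finitary variational
inequality for approximate fixed points. -/
theorem hsdm_single_metastable_with_vip
    {H : Type*} [NormedAddCommGroup H] [InnerProductSpace ℝ H] [CompleteSpace H]
    (d : ℕ) (hd : 1 ≤ d)
    (C : Set H) (hne : C.Nonempty) (hcl : IsClosed C) (hcv : Convex ℝ C)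
    (hbd : ∀ x ∈ C, ∀ y ∈ C, ‖x - y‖ ≤ (d : ℝ))
    (T : H → H) (hTm : Set.MapsTo T C C)
    (hT : ∀ x ∈ C, ∀ y ∈ C, ‖T x - T y‖ ≤ ‖x - y‖)
    (hfix : ∃ p ∈ C, T p = p)
    (τ : ℝ) (hτ0 : 0 ≤ τ) (hτ1 : τ < 1)
    (G : H → H) (hGm : Set.MapsTo G C C)
    (hG : ∀ x ∈ C, ∀ y ∈ C, ‖G x - G y‖ ≤ τ * ‖x - y‖)
    (lam : ℕ → ℝ) (hlam : ∀ n, lam n ∈ Set.Ioc (0 : ℝ) 1)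
    (h : ℕ → ℕ) (hh : ∀ n, 1 ≤ h n) (hlamh : ∀ n, 1 / (h n : ℝ) ≤ lam n)
    (χ : ℕ → ℕ) (hχ : ∀ n : ℕ, ∀ i ≥ χ n, lam i ≤ 1 / ((n : ℝ) + 1))
    (φ₁ : ℝ → ℕ) (hφ₁ : ∀ x : ℝ, 0 < x → x ≤ ∑ i ∈ Finset.Icc 1 (φ₁ x), lam i)
    (φ₂ : ℝ → ℕ)
    (hφ₂ : ∀ δ : ℝ, 0 < δ → ∀ n ≥ φ₂ δ, |lam n - lam (n + 1)| / (lam (n + 1)) ^ 2 ≤ δ)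
    (u : ℕ → H) (hu0 : u 0 ∈ C)
    (hrec : ∀ n, u (n + 1) = (1 - lam (n + 1)) • T (u n) + lam (n + 1) • G (T (u n)))
    (ε : ℝ) (hε : ε ∈ Set.Ioc (0 : ℝ) 1) (g : ℕ → ℕ) (x : H) (hx : x ∈ C) :
    ∃ n ≤ XiDef (ε / (2 * (d : ℝ) * (2 + τ)) / 6)
        (gcDef g (cDef τ d φ₁ φ₂ (ε / (2 * (d : ℝ) * (2 + τ))))) χ h d τ +
        cDef τ d φ₁ φ₂ (ε / (2 * (d : ℝ) * (2 + τ))),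
      (∀ i ∈ Set.Icc n (n + g n), ∀ j ∈ Set.Icc n (n + g n), ‖u i - u j‖ ≤ ε) ∧
      (‖T x - x‖ ≤ 1 / (KXi (ε / (2 * (d : ℝ) * (2 + τ)) / 6)
          (gcDef g (cDef τ d φ₁ φ₂ (ε / (2 * (d : ℝ) * (2 + τ))))) χ h d τ : ℝ) →
        ⟪G (u n) - u n, x - u n⟫ ≤ ε) := by
  obtain ⟨n, hn, hmeta, hvip⟩ := hsdm_single_metastable_with_vip_general hd hcl.isComplete hbd
    ⟨hcv, hTm, hT, hGm, hG, hτ0, hτ1⟩ hlam hh hlamh hχ hφ₁ hφ₂ hu0 hrec hε g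
  exact ⟨n, hn, hmeta, hvip n ⟨le_rfl, Nat.le_add_right n _⟩ x hx⟩
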